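/- There exists no finite group G such that tp(G) = (p!/p^p) · (q!/q^q) for primes p < q. -/

import Mathlib

open scoped Pointwise Classical

/-- `T` is simultaneously a left transversal for `H` (each left coset `gH` contains exactly one
element of `T`) and a right transversal for `K` (each right coset `Kg` contains exactly one
element of `T`). -/
def IsDoubleTransversal {G : Type*} [Group G] (H K : Subgroup G) (T : Set G) : Prop :=
  (∀ g : G, ∃! t : G, t ∈ T ∧ g⁻¹ * t ∈ H) ∧ (∀ g : G, ∃! t : G, t ∈ T ∧ t * g⁻¹ ∈ K)

/-- `|DT_G(H,K)|`: the number of common transversals for the pair `(H, K)`. -/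
noncomputable def numDT {G : Type*} [Group G] (H K : Subgroup G) : ℕ :=
  Nat.card {T : Set G // IsDoubleTransversal H K T}

/-- `P_G(H,K) = |DT_G(H,K)| / |H| ^ (G:H)`, the common transversal probability. -/
noncomputable def transProb {G : Type*} [Group G] (H K : Subgroup G) : ℚ :=
  (numDT H K : ℚ) / (Nat.card H : ℚ) ^ H.index

/-- `tp(G)`: the minimum of `P_G(H) = P_G(H,H)` over all subgroups `H ≤ G`. -/
noncomputable def tp (G : Type*) [Group G] [Finite G] : ℚ :=
  haveI : Finite (Subgroup G) :=
    Finite.of_injective (fun H : Subgroup G => (H : Set G)) SetLike.coe_injective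
  haveI : Fintype (Subgroup G) := Fintype.ofFinite _
  Finset.univ.inf' Finset.univ_nonempty (fun H : Subgroup G => transProb H H)

/-!
If `G` acts transitively and `H` is the stabilizer of a point, then `P_G(H)` is the product of
`k! / k ^ k` over the lengths `k` of the `H`-orbits. If it equals `(p! / p ^ p) * (q! / q ^ q)` for
primes `p < q`, then, by its `q`-adic and `p`-adic valuations, some `k` is divisible by `q` and some
`k` by `p`; as `k! / k ^ k` decreases rapidly, the orbit lengths other than `1` are `p` and `q`.

Let `C` be the orbit of length `q`. Since `q` is coprime to all other orbit lengths, the complement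
of `C` is a block, of length `q`. It consists of the orbit of length `p` and of the fixed points of
`H`, and the number of the latter is the index of `H` in its normalizer, a divisor of `q`. So there
is just one, `q = p + 1`, and therefore `p = 2` and `q = 3`. For the pointwise stabilizer `K` of
`C`, the product formula then gives `P_G(K) < 1 / 9`, so the minimum is not attained at `H`.
-/

section PermProb

/-- The probability `n! / n ^ n` that a random self-map of an `n`-element set is a permutation.
A suborbit of length `n` contributes this factor to `transProb`. -/
noncomputable def permProb (n : ℕ) : ℚ := (n.factorial : ℚ) / (n : ℚ) ^ n

lemma permProb_pos (n : ℕ) : 0 < permProb n :=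
  div_pos (mod_cast n.factorial_pos) (mod_cast Nat.pow_self_pos)

@[simp] lemma permProb_one : permProb 1 = 1 := by simp [permProb]

lemma permProb_le_one (n : ℕ) : permProb n ≤ 1 :=
  div_le_one_of_le₀ (mod_cast n.factorial_le_pow) (by positivity)

/-- The left side divided by the right side is a single term of the binomial expansion of
`(m / (m + n) + n / (m + n)) ^ (m + n) = 1`. -/
lemma permProb_add_le (m n : ℕ) : permProb (m + n) ≤ permProb m * permProb n := by
  have hterm : (m + n).choose m * (m ^ m * n ^ n) ≤ (m + n) ^ (m + n) := by
    rw [add_pow]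
    refine le_of_eq_of_le ?_ (Finset.single_le_sum (fun _ _ => Nat.zero_le _)
      (Finset.mem_range.2 (show m < m + n + 1 by omega)))
    rw [Nat.add_sub_cancel_left, mul_comm, Nat.cast_id]
  have hfac : (m + n).choose m * m.factorial * n.factorial = (m + n).factorial := by
    simpa using Nat.choose_mul_factorial_mul_factorial (Nat.le_add_right m n)
  have hpos : ∀ k : ℕ, (0 : ℚ) < (k : ℚ) ^ k := fun k => mod_cast Nat.pow_self_pos
  rw [permProb, permProb, permProb, div_mul_div_comm,
    div_le_div_iff₀ (hpos _) (mul_pos (hpos m) (hpos n)), ← hfac]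
  norm_cast
  calc (m + n).choose m * m.factorial * n.factorial * (m ^ m * n ^ n)
      = m.factorial * n.factorial * ((m + n).choose m * (m ^ m * n ^ n)) := by ring
    _ ≤ m.factorial * n.factorial * (m + n) ^ (m + n) := Nat.mul_le_mul_left _ hterm

lemma permProb_antitone : Antitone permProb := by
  intro m n hmn
  obtain ⟨k, rfl⟩ := Nat.exists_eq_add_of_le hmn
  exact (permProb_add_le m k).trans (mul_le_of_le_one_right (permProb_pos m).le (permProb_le_one k))

lemma permProb_succ_lt {n : ℕ} (hn : n ≠ 0) : permProb (n + 1) < permProb n := by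
  have hpow : n ^ n < (n + 1) ^ n := Nat.pow_lt_pow_left n.lt_succ_self hn
  rw [permProb, permProb, div_lt_div_iff₀ (by positivity) (by positivity)]
  norm_cast
  calc (n + 1).factorial * n ^ n < (n + 1).factorial * (n + 1) ^ n :=
        Nat.mul_lt_mul_of_pos_left hpow (Nat.factorial_pos _)
    _ = n.factorial * (n + 1) ^ (n + 1) := by rw [Nat.factorial_succ, pow_succ]; ring

lemma permProb_lt_permProb {m n : ℕ} (hmn : m < n) (hn : 1 < n) : permProb n < permProb m := by
  obtain ⟨k, rfl⟩ := Nat.exists_eq_add_of_lt hn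
  exact (permProb_succ_lt (by omega)).trans_le (permProb_antitone (by omega))

variable {ι : Type*} (k : ι → ℕ)

lemma prod_permProb_pos (s : Finset ι) : 0 < ∏ i ∈ s, permProb (k i) :=
  Finset.prod_pos fun _ _ => permProb_pos _

lemma prod_permProb_le_of_subset {s t : Finset ι} (hst : s ⊆ t) :
    ∏ i ∈ t, permProb (k i) ≤ ∏ i ∈ s, permProb (k i) := by
  rw [← Finset.prod_sdiff hst]
  exact mul_le_of_le_one_left (prod_permProb_pos k s).le
    (Finset.prod_le_one (fun _ _ => (permProb_pos _).le) fun _ _ => permProb_le_one _)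

lemma prod_permProb_le_of_mem {s : Finset ι} {i : ι} (hi : i ∈ s) :
    ∏ i ∈ s, permProb (k i) ≤ permProb (k i) := by
  simpa using prod_permProb_le_of_subset k (Finset.singleton_subset_iff.2 hi)

lemma padicValRat_permProb (r n : ℕ) [Fact r.Prime] :
    padicValRat r (permProb n) = padicValNat r n.factorial - n * padicValNat r n := by
  rw [permProb, padicValRat.div (mod_cast n.factorial_ne_zero) (mod_cast Nat.pow_self_pos.ne'),
    padicValRat.pow, padicValRat.of_nat, padicValRat.of_nat]

lemma padicValRat_permProb_nonneg {r n : ℕ} [Fact r.Prime] (h : ¬r ∣ n) :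
    0 ≤ padicValRat r (permProb n) := by
  simp [padicValRat_permProb, padicValNat.eq_zero_of_not_dvd h]

lemma padicValRat_permProb_self (r : ℕ) [hr : Fact r.Prime] :
    padicValRat r (permProb r) = 1 - r := by
  have hfac : padicValNat r r.factorial = 1 := by simpa using padicValNat_factorial_mul (p := r) 1
  simp [padicValRat_permProb, hfac]

lemma padicValRat_permProb_of_lt {r n : ℕ} [hr : Fact r.Prime] (hn : n < r) :
    padicValRat r (permProb n) = 0 := by
  have hfac : ¬r ∣ n.factorial := by rwa [hr.out.dvd_factorial, not_le]
  rcases n.eq_zero_or_pos with rfl | hpos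
  · simp [permProb]
  · simp [padicValRat_permProb, padicValNat.eq_zero_of_not_dvd hfac,
      padicValNat.eq_zero_of_not_dvd (Nat.not_dvd_of_pos_of_lt hpos hn)]

lemma exists_dvd_of_padicValRat_prod_permProb_neg {r : ℕ} [Fact r.Prime] {s : Finset ι}
    (h : padicValRat r (∏ i ∈ s, permProb (k i)) < 0) : ∃ i ∈ s, r ∣ k i := by
  contrapose! h
  induction s using Finset.cons_induction with
  | empty => simp
  | cons i s hi ih =>
    rw [Finset.prod_cons, padicValRat.mul (permProb_pos _).ne' (prod_permProb_pos k s).ne']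
    exact add_nonneg (padicValRat_permProb_nonneg (h i (Finset.mem_cons_self i s)))
      (ih fun j hj => h j (Finset.mem_cons_of_mem hj))

lemma exists_dvd_of_prod_permProb_eq {s : Finset ι} {m q : ℕ} (hq : q.Prime) (hmq : m < q)
    (h : ∏ i ∈ s, permProb (k i) = permProb m * permProb q) : ∃ i ∈ s, q ∣ k i := by
  have : Fact q.Prime := ⟨hq⟩
  refine exists_dvd_of_padicValRat_prod_permProb_neg k ?_
  rw [h, padicValRat.mul (permProb_pos m).ne' (permProb_pos q).ne', padicValRat_permProb_of_lt hmq,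
    padicValRat_permProb_self, zero_add, sub_neg]
  exact_mod_cast hq.one_lt

/-- Some `k i` is divisible by `q`; it cannot be `2q` or more because
`permProb (2 * q) ≤ permProb q ^ 2 < permProb m * permProb q`. -/
lemma exists_eq_of_prod_permProb_eq {s : Finset ι} (hk : ∀ i ∈ s, k i ≠ 0) {m q : ℕ}
    (hq : q.Prime) (hmq : m < q) (h : ∏ i ∈ s, permProb (k i) = permProb m * permProb q) :
    ∃ i ∈ s, k i = q ∧ ∏ j ∈ s.erase i, permProb (k j) = permProb m := by
  obtain ⟨i, hi, c, hc⟩ := exists_dvd_of_prod_permProb_eq k hq hmq h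
  have hc0 : c ≠ 0 := by
    rintro rfl
    exact hk i hi hc
  have hc2 : c < 2 := by
    by_contra! hc2
    have hle : permProb m * permProb q ≤ permProb q * permProb q := calc
      permProb m * permProb q ≤ permProb (k i) := h ▸ prod_permProb_le_of_mem k hi
      _ ≤ permProb (q + q) := permProb_antitone (by rw [hc, ← mul_two]; gcongr)
      _ ≤ permProb q * permProb q := permProb_add_le q q
    exact hle.not_gt (mul_lt_mul_of_pos_right (permProb_lt_permProb hmq hq.one_lt) (permProb_pos q))
  have hkq : k i = q := by rw [hc, show c = 1 by omega, mul_one]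
  refine ⟨i, hi, hkq, mul_right_cancel₀ (permProb_pos q).ne' ?_⟩
  rw [← h, ← Finset.prod_erase_mul s _ hi, hkq]

lemma le_one_of_prod_permProb_eq_one {s : Finset ι} (h : ∏ i ∈ s, permProb (k i) = 1) {i : ι}
    (hi : i ∈ s) : k i ≤ 1 := by
  by_contra! hlt
  exact (permProb_lt_permProb hlt hlt).not_ge
    (by simpa [h] using prod_permProb_le_of_mem k hi)

lemma exists_eq_primes_of_prod_permProb_eq {s : Finset ι} (hk : ∀ i ∈ s, k i ≠ 0) {p q : ℕ}
    (hp : p.Prime) (hq : q.Prime) (hpq : p < q)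
    (h : ∏ i ∈ s, permProb (k i) = permProb p * permProb q) :
    ∃ i ∈ s, ∃ j ∈ s, k i = p ∧ k j = q ∧ ∀ l ∈ s, l ≠ i → l ≠ j → k l ≤ 1 := by
  obtain ⟨j, hj, hkj, hprod⟩ := exists_eq_of_prod_permProb_eq k hk hq hpq h
  obtain ⟨i, hi, hki, hprod⟩ := exists_eq_of_prod_permProb_eq k
    (fun l hl => hk l (Finset.mem_of_mem_erase hl)) hp hp.one_lt
    (by rw [hprod, permProb_one, one_mul])
  refine ⟨i, Finset.mem_of_mem_erase hi, j, hj, hki, hkj, fun l hl hli hlj => ?_⟩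
  exact le_one_of_prod_permProb_eq_one k (hprod.trans permProb_one)
    (Finset.mem_erase_of_ne_of_mem hli (Finset.mem_erase_of_ne_of_mem hlj hl))

end PermProb

section CommonSections

open Function

variable {α X Y : Type*} (l : α → X) (r : α → Y)

lemma bijective_domRestrict_range {s : X → α} (hs : Injective s) {f : α → Y}
    (hf : Bijective (f ∘ s)) : Bijective ((Set.range s).domRestrict f) :=
  (Bijective.of_comp_iff _ ⟨Set.rangeFactorization_injective.2 hs,
    Set.rangeFactorization_surjective⟩).1 hf

/-- A common transversal `T` of the fibres of `l` and `r` matches the values of `l` with those of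
`r`; given the matching `σ`, it is a choice of one element of each cell `l = x`, `r = σ x`. -/
lemma card_bijective_domRestrict [Finite α] [Fintype X] [Fintype (X ≃ Y)] :
    Nat.card {T : Set α // Bijective (T.domRestrict l) ∧ Bijective (T.domRestrict r)} =
      ∑ σ : X ≃ Y, ∏ x, Nat.card {a // l a = x ∧ r a = σ x} := by
  have hl (σ : X ≃ Y) (s : ∀ x, {a // l a = x ∧ r a = σ x}) : (l ∘ fun x => (s x).1) = id :=
    funext fun x => (s x).2.1
  have hr (σ : X ≃ Y) (s : ∀ x, {a // l a = x ∧ r a = σ x}) : (r ∘ fun x => (s x).1) = σ :=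
    funext fun x => (s x).2.2
  have hinj (σ : X ≃ Y) (s : ∀ x, {a // l a = x ∧ r a = σ x}) : Injective fun x => (s x).1 :=
    Injective.of_comp (f := l) (by rw [hl]; exact injective_id)
  let range : (Σ σ : X ≃ Y, ∀ x, {a // l a = x ∧ r a = σ x}) →
      {T : Set α // Bijective (T.domRestrict l) ∧ Bijective (T.domRestrict r)} := fun ⟨σ, s⟩ =>
    ⟨Set.range fun x => (s x).1,
      bijective_domRestrict_range (hinj σ s) (by rw [hl]; exact bijective_id),
      bijective_domRestrict_range (hinj σ s) (by rw [hr]; exact σ.bijective)⟩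
  have hrange : Bijective range := by
    constructor
    · rintro ⟨σ, s⟩ ⟨σ', s'⟩ h
      have hs (x : X) : (s x).1 = (s' x).1 := by
        obtain ⟨x', hx'⟩ : (s x).1 ∈ (range ⟨σ', s'⟩).1 := h ▸ Set.mem_range_self x
        rw [← hx', ← (s x).2.1, ← hx', (s' x').2.1]
      obtain rfl : σ = σ' := Equiv.ext fun x => by rw [← (s x).2.2, ← (s' x).2.2, hs]
      rw [funext fun x => Subtype.ext (hs x)]
    · rintro ⟨T, hTl, hTr⟩
      let eX := Equiv.ofBijective _ hTl
      let eY := Equiv.ofBijective _ hTr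
      refine ⟨⟨eX.symm.trans eY, fun x => ⟨eX.symm x, eX.apply_symm_apply x, rfl⟩⟩, Subtype.ext ?_⟩
      exact (eX.symm.surjective.range_comp _).trans Subtype.range_coe
  rw [← Nat.card_eq_of_bijective range hrange, Nat.card_sigma]
  simp only [Nat.card_pi]

lemma card_equiv_over {W : Type*} [Finite X] [Finite Y] [Fintype W] {u : X → W} {v : Y → W}
    (h : ∀ w, Nat.card {x // u x = w} = Nat.card {y // v y = w}) :
    Nat.card {σ : X ≃ Y // ∀ x, v (σ x) = u x} = ∏ w, (Nat.card {x // u x = w}).factorial := by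
  let e : {σ : X ≃ Y // ∀ x, v (σ x) = u x} ≃ ∀ w, {x // u x = w} ≃ {y // v y = w} :=
    { toFun := fun σ w => σ.1.subtypeEquiv fun x => by rw [σ.2]
      invFun := fun e => ⟨Equiv.ofFiberEquiv e, Equiv.ofFiberEquiv_map e⟩
      left_inv := fun σ => Subtype.ext (Equiv.ext fun x => rfl)
      right_inv := fun e => by
        funext w
        ext ⟨x, rfl⟩
        rfl }
  rw [Nat.card_congr e, Nat.card_pi]
  refine Finset.prod_congr rfl fun w _ => ?_
  have := Fintype.ofFinite X
  have := Fintype.ofFinite Y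
  rw [Nat.card_eq_fintype_card, Nat.card_eq_fintype_card,
    Fintype.card_equiv (Fintype.equivOfCardEq (by simpa using h w))]

lemma card_bijective_domRestrict_of_comm {W : Type*} [Finite α] [Fintype X] [Finite Y] [Fintype W]
    {u : X → W} {v : Y → W} (hcomm : ∀ a, v (r a) = u (l a)) {c : X → ℕ}
    (hc : ∀ x y, v y = u x → Nat.card {a // l a = x ∧ r a = y} = c x)
    (h : ∀ w, Nat.card {x // u x = w} = Nat.card {y // v y = w}) :
    Nat.card {T : Set α // Bijective (T.domRestrict l) ∧ Bijective (T.domRestrict r)} =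
      (∏ w, (Nat.card {x // u x = w}).factorial) * ∏ x, c x := by
  have hterm (σ : X ≃ Y) : ∏ x, Nat.card {a // l a = x ∧ r a = σ x} =
      if ∀ x, v (σ x) = u x then ∏ x, c x else 0 := by
    split_ifs with hσ
    · exact Finset.prod_congr rfl fun x _ => hc x (σ x) (hσ x)
    · obtain ⟨x, hx⟩ := not_forall.1 hσ
      refine Finset.prod_eq_zero (Finset.mem_univ x) (Nat.card_eq_zero.2 (.inl ⟨?_⟩))
      rintro ⟨a, rfl, ha⟩
      exact hx (ha ▸ hcomm a)
  have := Fintype.ofFinite (X ≃ Y)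
  rw [card_bijective_domRestrict, Finset.sum_congr rfl fun σ _ => hterm σ, ← Finset.sum_filter,
    Finset.sum_const, smul_eq_mul, ← Fintype.card_subtype, ← Nat.card_eq_fintype_card,
    card_equiv_over h]

end CommonSections

section SuborbitFormula

open Function MulAction

variable {G Ω : Type*} [Group G] [MulAction G Ω]

lemma bijective_domRestrict_iff {α β : Type*} {T : Set α} {f : α → β} :
    Bijective (T.domRestrict f) ↔ ∀ b, ∃! a, a ∈ T ∧ f a = b := by
  simp only [bijective_iff_existsUnique, Set.domRestrict_apply, ExistsUnique, Subtype.exists,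
    Subtype.forall, Subtype.mk.injEq, exists_prop, and_imp, and_assoc]

lemma isDoubleTransversal_stabilizer_iff [IsPretransitive G Ω] (ω : Ω) (K : Subgroup G)
    (T : Set G) :
    IsDoubleTransversal (stabilizer G ω) K T ↔
      Bijective (T.domRestrict (· • ω)) ∧
        Bijective (T.domRestrict fun g => ((g⁻¹ : G) : G ⧸ K)) := by
  rw [bijective_domRestrict_iff, bijective_domRestrict_iff, (surjective_smul G ω).forall,
    (QuotientGroup.mk_surjective.comp inv_surjective).forall]
  simp only [IsDoubleTransversal, mem_stabilizer_iff, mul_smul, inv_smul_eq_iff, comp_apply,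
    QuotientGroup.eq, inv_inv]

/-- The orbit of `x` under the subgroup `K`, as a point of the orbit space. -/
def orbitClass (K : Subgroup G) (x : Ω) : orbitRel.Quotient K Ω := Quotient.mk'' x

lemma orbitClass_eq_iff {K : Subgroup G} {x y : Ω} :
    orbitClass K x = orbitClass K y ↔ x ∈ orbit K y := by
  rw [orbitClass, orbitClass, Quotient.eq'', orbitRel_apply]

lemma mem_quotient_orbit_iff {K : Subgroup G} {x : Ω} {w : orbitRel.Quotient K Ω} :
    x ∈ w.orbit ↔ orbitClass K x = w :=
  orbitRel.Quotient.mem_orbit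

/-- The `K`-orbit of `g • ω`, as a function of the coset `g⁻¹ K`: the suborbit paired with the one
that the stabilizer of `ω` sweeps out on `G ⧸ K`. -/
def pairedOrbit (ω : Ω) (K : Subgroup G) : G ⧸ K → orbitRel.Quotient K Ω :=
  Quotient.lift (fun g => orbitClass K (g⁻¹ • ω)) fun g h hgh =>
    Quotient.sound' ⟨⟨g⁻¹ * h, QuotientGroup.leftRel_apply.1 hgh⟩, by
      simp [Subgroup.smul_def, mul_smul]⟩

lemma pairedOrbit_mk_inv (ω : Ω) (K : Subgroup G) (g : G) :
    pairedOrbit ω K (g⁻¹ : G) = orbitClass K (g • ω) := by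
  conv_rhs => rw [← inv_inv g]
  rfl

lemma card_cell (ω : Ω) (K : Subgroup G) (g : G) :
    Nat.card {a : G // a • ω = g • ω ∧ ((a⁻¹ : G) : G ⧸ K) = (g⁻¹ : G)} =
      Nat.card (stabilizer K (g • ω)) :=
  Nat.card_congr
    { toFun := fun a => ⟨⟨a * g⁻¹, by simpa [QuotientGroup.eq] using a.2.2⟩, by
        simpa [Subgroup.smul_def, mul_smul] using a.2.1⟩
      invFun := fun u => ⟨u * g, by rw [mul_smul]; exact u.2, by simp⟩
      left_inv := fun a => by simp
      right_inv := fun u => by simp }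

lemma card_cell_of_pairedOrbit_eq [IsPretransitive G Ω] {ω : Ω} {K : Subgroup G} {x : Ω} {y : G ⧸ K}
    (h : pairedOrbit ω K y = orbitClass K x) :
    Nat.card {a : G // a • ω = x ∧ ((a⁻¹ : G) : G ⧸ K) = y} = Nat.card (stabilizer K x) := by
  obtain ⟨g, rfl⟩ := (QuotientGroup.mk_surjective.comp inv_surjective) y
  rw [comp_apply, pairedOrbit_mk_inv, eq_comm, orbitClass_eq_iff] at h
  obtain ⟨u, rfl⟩ := h
  have hx : u • g • ω = (u * g : G) • ω := (mul_smul (u : G) g ω).symm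
  have hy : ((g⁻¹ : G) : G ⧸ K) = ((u * g : G)⁻¹ : G) := by simp
  beta_reduce
  rw [comp_apply, hx, hy, card_cell]

lemma card_setOf_smul_mem [IsPretransitive G Ω] (ω : Ω) (S : Set Ω) :
    Nat.card {g : G // g • ω ∈ S} = Nat.card (stabilizer G ω) * Nat.card S := by
  have hsurj : Surjective (ofQuotientStabilizer G ω) := fun x => by
    obtain ⟨g, rfl⟩ := exists_smul_eq G ω x
    exact ⟨g, rfl⟩
  rw [← Nat.card_preimage_of_injective (injective_ofQuotientStabilizer G ω)
    (hsurj.range_eq ▸ Set.subset_univ S), ← QuotientGroup.card_preimage_mk]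
  rfl

lemma card_fiber_pairedOrbit [Finite G] [IsPretransitive G Ω] (ω : Ω) {K : Subgroup G}
    (hK : Nat.card (stabilizer G ω) = Nat.card K) (w : orbitRel.Quotient K Ω) :
    Nat.card {y // pairedOrbit ω K y = w} = w.orbit.ncard := by
  refine Nat.eq_of_mul_eq_mul_left (Nat.card_pos (α := K)) ?_
  calc Nat.card K * Nat.card {y // pairedOrbit ω K y = w}
      = Nat.card {g : G // pairedOrbit ω K g = w} :=
        (QuotientGroup.card_preimage_mk K {y | pairedOrbit ω K y = w}).symm
    _ = Nat.card {g : G // g • ω ∈ w.orbit} :=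
        Nat.card_congr ((Equiv.inv G).subtypeEquiv fun g => by
          rw [mem_quotient_orbit_iff, ← pairedOrbit_mk_inv, Equiv.inv_apply, inv_inv])
    _ = Nat.card K * w.orbit.ncard := by
        rw [card_setOf_smul_mem, hK, Nat.card_coe_set_eq]

lemma numDT_stabilizer [Finite G] [IsPretransitive G Ω] [Fintype Ω] (ω : Ω) {K : Subgroup G}
    [Fintype (orbitRel.Quotient K Ω)] (hK : Nat.card (stabilizer G ω) = Nat.card K) :
    numDT (stabilizer G ω) K = (∏ w : orbitRel.Quotient K Ω, w.orbit.ncard.factorial) *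
      ∏ x : Ω, Nat.card (stabilizer K x) := by
  have hfib (w : orbitRel.Quotient K Ω) : Nat.card {x // orbitClass K x = w} = w.orbit.ncard :=
    Nat.card_congr (Equiv.subtypeEquivRight fun _ => mem_quotient_orbit_iff.symm)
  rw [numDT, Nat.card_congr (Equiv.subtypeEquivRight (isDoubleTransversal_stabilizer_iff ω K)),
    card_bijective_domRestrict_of_comm _ _ (pairedOrbit_mk_inv ω K)
      (fun _ _ => card_cell_of_pairedOrbit_eq)
      fun w => (hfib w).trans (card_fiber_pairedOrbit ω hK w).symm]
  simp only [hfib]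

theorem transProb_stabilizer [Finite G] [IsPretransitive G Ω] (ω : Ω) {K : Subgroup G}
    [Fintype (orbitRel.Quotient K Ω)] (hK : Nat.card (stabilizer G ω) = Nat.card K) :
    transProb (stabilizer G ω) K = ∏ w : orbitRel.Quotient K Ω, permProb w.orbit.ncard := by
  have := Finite.of_surjective _ (surjective_smul G ω)
  have := Fintype.ofFinite Ω
  have hpow : (Nat.card K : ℚ) ^ (stabilizer G ω).index = ∏ _x : Ω, (Nat.card K : ℚ) := by
    rw [index_stabilizer_of_transitive, Finset.prod_const, Finset.card_univ,
      ← Nat.card_eq_fintype_card (α := Ω)]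
  have hstab (x : Ω) : (Nat.card (stabilizer K x) : ℚ) / Nat.card K =
      ((orbitClass K x).orbit.ncard : ℚ)⁻¹ := by
    rw [orbitClass, orbitRel.Quotient.orbit_mk, ← index_stabilizer,
      ← (stabilizer K x).card_mul_index, Nat.cast_mul, div_mul_cancel_left₀]
    exact_mod_cast Nat.card_pos.ne'
  have hfib (w : orbitRel.Quotient K Ω) :
      ∏ _x : {x // orbitClass K x = w}, (w.orbit.ncard : ℚ)⁻¹ =
        ((w.orbit.ncard : ℚ) ^ w.orbit.ncard)⁻¹ := by
    rw [Finset.prod_const, inv_pow, Finset.card_univ, ← Nat.card_eq_fintype_card,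
      Nat.card_congr (Equiv.subtypeEquivRight fun _ => mem_quotient_orbit_iff.symm),
      Nat.card_coe_set_eq]
  rw [transProb, numDT_stabilizer ω hK, hK, hpow, Nat.cast_mul, Nat.cast_prod, Nat.cast_prod,
    mul_div_assoc, ← Finset.prod_div_distrib]
  simp only [hstab]
  rw [← Fintype.prod_fiberwise' (orbitClass K) fun w => (w.orbit.ncard : ℚ)⁻¹]
  simp only [hfib, ← Finset.prod_mul_distrib, permProb, div_eq_mul_inv]

end SuborbitFormula

section Orbits

open MulAction

variable {G X : Type*} [Group G] [MulAction G X]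

lemma ncard_orbit_subgroup (K : Subgroup G) (x : X) :
    (orbit K x).ncard = (stabilizer G x).relIndex K :=
  (index_stabilizer K x).symm

lemma orbit_stabilizer_eq_of_coprime {x y : X} (hfin : (orbit G y).Finite)
    (hcop : (orbit G x).ncard.Coprime (orbit G y).ncard) :
    orbit (stabilizer G x) y = orbit G y := by
  have hsub : orbit (stabilizer G x) y ⊆ orbit G y := orbit_subgroup_subset _ y
  have hpos : 0 < (orbit (stabilizer G x) y).ncard :=
    (Set.ncard_pos (hfin.subset hsub)).2 (nonempty_orbit y)
  have hdvd : (orbit G y).ncard ∣ (orbit (stabilizer G x) y).ncard := by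
    refine hcop.symm.dvd_of_dvd_mul_right ?_
    rw [ncard_orbit_subgroup, ← index_stabilizer G x, ← index_stabilizer G y,
      ← Subgroup.inf_relIndex_right, Subgroup.relIndex_mul_index inf_le_right]
    exact Subgroup.index_dvd_of_le inf_le_left
  exact Set.eq_of_subset_of_ncard_le hsub (Nat.le_of_dvd hpos hdvd) hfin

lemma notMem_orbit_of_mem_fixedPoints {x y : X} (hx : x ∈ fixedPoints G X)
    (hy : (orbit G y).ncard ≠ 1) : x ∉ orbit G y := fun hxy => by
  have hsub := subsingleton_orbit_iff_mem_fixedPoints.2 hx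
  rw [orbit_eq_iff.2 hxy] at hsub
  exact hy (Set.ncard_eq_one.2 ⟨y, hsub.eq_singleton_of_mem (mem_orbit_self y)⟩)

lemma fixedPoints_stabilizer [Finite G] [IsPretransitive G X] (x : X) :
    fixedPoints (stabilizer G x) X = orbit (Subgroup.normalizer (stabilizer G x : Set G)) x := by
  ext y
  obtain ⟨g, rfl⟩ := exists_smul_eq G x y
  have hfix : g • x ∈ fixedPoints (stabilizer G x) X ↔
      stabilizer G x ≤ (stabilizer G x).map (MulAut.conj g).toMonoidHom := by
    rw [← stabilizer_smul_eq_stabilizer_map_conj]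
    exact ⟨fun h u hu => h ⟨u, hu⟩, fun h u => h u.2⟩
  rw [hfix]
  refine ⟨fun h => ?_, ?_⟩
  · have hcard : Nat.card ((stabilizer G x).map (MulAut.conj g).toMonoidHom) =
        Nat.card (stabilizer G x) := Subgroup.card_map_of_injective (MulAut.conj g).injective
    exact ⟨⟨g, Subgroup.mem_normalizer_iff_map_conj_eq.2
      (Subgroup.eq_of_le_of_card_ge h hcard.le).symm⟩, rfl⟩
  · rintro ⟨⟨n, hn⟩, hng : n • x = g • x⟩
    rw [← stabilizer_smul_eq_stabilizer_map_conj, ← hng, stabilizer_smul_eq_stabilizer_map_conj]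
    exact (Subgroup.mem_normalizer_iff_map_conj_eq.1 hn).ge

end Orbits

section SuborbitBounds

open MulAction

variable {G X : Type*} [Group G] [Finite G] [MulAction G X] [IsPretransitive G X] {x : X}

lemma transProb_stabilizer_le_permProb (y : X) :
    transProb (stabilizer G x) (stabilizer G x) ≤ permProb (orbit (stabilizer G x) y).ncard := by
  have := Finite.of_surjective _ (surjective_smul G x)
  have := Fintype.ofFinite (orbitRel.Quotient (stabilizer G x) X)
  rw [transProb_stabilizer x rfl]
  exact prod_permProb_le_of_mem _ (Finset.mem_univ (orbitClass (stabilizer G x) y))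

lemma transProb_stabilizer_le_mul {y z : X} (hzy : z ∉ orbit (stabilizer G x) y) :
    transProb (stabilizer G x) (stabilizer G x) ≤
      permProb (orbit (stabilizer G x) z).ncard * permProb (orbit (stabilizer G x) y).ncard := by
  have := Finite.of_surjective _ (surjective_smul G x)
  have := Fintype.ofFinite (orbitRel.Quotient (stabilizer G x) X)
  rw [transProb_stabilizer x rfl]
  refine (prod_permProb_le_of_subset _ (Finset.subset_univ
    {orbitClass (stabilizer G x) z, orbitClass (stabilizer G x) y})).trans_eq ?_
  rw [Finset.prod_pair (orbitClass_eq_iff.not.2 hzy)]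
  rfl

lemma transProb_stabilizer_le_sq {S : Set X} {k : ℕ}
    (hS : ∀ y ∈ S, (orbit (stabilizer G x) y).ncard = k) (hk : k < S.ncard) :
    transProb (stabilizer G x) (stabilizer G x) ≤ permProb k ^ 2 := by
  obtain ⟨y, hy⟩ := Set.nonempty_of_ncard_ne_zero (Nat.ne_zero_of_lt hk)
  have := Finite.of_surjective _ (surjective_smul G x)
  obtain ⟨z, hz, hzy⟩ := Set.exists_mem_notMem_of_ncard_lt_ncard ((hS y hy).trans_lt hk)
  have hle := transProb_stabilizer_le_mul hzy
  rwa [hS y hy, hS z hz, ← sq] at hle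

/-- If the orbits in `S` have length at least `4`, one of them suffices; if they have length `3`,
then `S` contains two of them. -/
lemma transProb_stabilizer_lt {S : Set X} {k : ℕ}
    (hS : ∀ y ∈ S, (orbit (stabilizer G x) y).ncard = k) (hSne : S.Nonempty) (hk : 3 ≤ k)
    (hk' : k = 3 → 3 < S.ncard) :
    transProb (stabilizer G x) (stabilizer G x) < permProb 2 * permProb 3 := by
  rcases hk.eq_or_lt with rfl | hk
  · calc transProb (stabilizer G x) (stabilizer G x) ≤ permProb 3 ^ 2 :=
        transProb_stabilizer_le_sq hS (hk' rfl)
      _ < permProb 2 * permProb 3 := by norm_num [permProb, Nat.factorial]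
  · obtain ⟨y, hy⟩ := hSne
    calc transProb (stabilizer G x) (stabilizer G x) ≤ permProb k :=
        hS y hy ▸ transProb_stabilizer_le_permProb y
      _ ≤ permProb 4 := permProb_antitone hk
      _ < permProb 2 * permProb 3 := by norm_num [permProb, Nat.factorial]

lemma ncard_compl_orbit_of_index_eq_two {M : Subgroup G} (hM : stabilizer G x ≤ M)
    (hindex : M.index = 2) : (orbit M x)ᶜ.ncard = (stabilizer G x).relIndex M := by
  have := Finite.of_surjective _ (surjective_smul G x)
  have hadd := Set.ncard_add_ncard_compl (orbit M x)
  rw [← index_stabilizer_of_transitive G x, ← Subgroup.relIndex_mul_index hM, hindex,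
    ncard_orbit_subgroup] at hadd
  omega

end SuborbitBounds

section FixingSubgroup

open MulAction

variable {G X : Type*} [Group G] [MulAction G X] {s : Set X}

lemma relIndex_fixingSubgroup_dvd_factorial (s : Set X) [Finite s] :
    (fixingSubgroup G s).relIndex (stabilizer G s) ∣ s.ncard.factorial := by
  have hker : (fixingSubgroup G s).subgroupOf (stabilizer G s) =
      (toPermHom (stabilizer G s) s).ker := by
    ext u
    simp [Subgroup.mem_subgroupOf, mem_fixingSubgroup_iff, Equiv.ext_iff, Subtype.ext_iff]
  rw [Subgroup.relIndex, hker, Subgroup.index_ker, ← Nat.card_coe_set_eq, ← Nat.card_perm]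
  exact Subgroup.card_subgroup_dvd_card _

lemma fixingSubgroup_univ_le_stabilizer (x : X) :
    fixingSubgroup G (Set.univ : Set X) ≤ stabilizer G x := fun _ hg =>
  (mem_fixingSubgroup_iff G).1 hg x (Set.mem_univ x)

lemma stabilizer_mk_fixingSubgroup (s : Set X) (g : G) :
    stabilizer G (g : G ⧸ fixingSubgroup G s) = fixingSubgroup G (g • s) := by
  have hg : (g : G ⧸ fixingSubgroup G s) = g • ((1 : G) : G ⧸ fixingSubgroup G s) := by simp
  rw [hg, stabilizer_smul_eq_stabilizer_map_conj, stabilizer_quotient,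
    SubMulAction.fixingSubgroup_smul_eq_fixingSubgroup_map_conj]

lemma ncard_orbit_mk_fixingSubgroup {g : G} (hg : s ∪ g • s = Set.univ) :
    (orbit (fixingSubgroup G s) (g : G ⧸ fixingSubgroup G s)).ncard =
      (fixingSubgroup G (Set.univ : Set X)).relIndex (fixingSubgroup G s) := by
  rw [← hg, fixingSubgroup_union, Subgroup.inf_relIndex_left, ← stabilizer_mk_fixingSubgroup]
  exact ncard_orbit_subgroup _ _

lemma ncard_orbit_fixingSubgroup (hs : ∀ g ∉ stabilizer G s, s ∪ g • s = Set.univ)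
    {y : G ⧸ fixingSubgroup G s} (hy : y ∉ orbit (stabilizer G s) ((1 : G) : G ⧸ _)) :
    (orbit (fixingSubgroup G s) y).ncard =
      (fixingSubgroup G (Set.univ : Set X)).relIndex (fixingSubgroup G s) := by
  obtain ⟨g, rfl⟩ := QuotientGroup.mk_surjective y
  refine ncard_orbit_mk_fixingSubgroup (hs g fun hg => hy ⟨⟨g, hg⟩, ?_⟩)
  exact congrArg _ (mul_one g)

/-- The orbits of `fixingSubgroup G s` on its own cosets outside `stabilizer G s` have a common
length `k`, and there are `j ∣ 3!` such cosets, where `18 ∣ k * j`. So `3 ∣ k`, and `j = 6` if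
`k = 3`. -/
theorem transProb_fixingSubgroup_lt [Finite G] (hcard : s.ncard = 3)
    (hindex : (stabilizer G s).index = 2) (hs : ∀ g ∉ stabilizer G s, s ∪ g • s = Set.univ)
    (hdvd : 2 * 3 * 3 ∣ (fixingSubgroup G (Set.univ : Set X)).relIndex (stabilizer G s)) :
    transProb (fixingSubgroup G s) (fixingSubgroup G s) < permProb 2 * permProb 3 := by
  have hle : fixingSubgroup G s ≤ stabilizer G s := fixingSubgroup_le_stabilizer G s
  have hj : (fixingSubgroup G s).relIndex (stabilizer G s) ∣ 6 := by
    have := (Set.finite_of_ncard_pos (hcard ▸ three_pos)).to_subtype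
    have hdvd := relIndex_fixingSubgroup_dvd_factorial (G := G) s
    rwa [hcard] at hdvd
  have hncard : (orbit (stabilizer G s) ((1 : G) : G ⧸ fixingSubgroup G s))ᶜ.ncard =
      (fixingSubgroup G s).relIndex (stabilizer G s) :=
    (ncard_compl_orbit_of_index_eq_two ((stabilizer_quotient _).trans_le hle) hindex).trans
      (by rw [stabilizer_quotient])
  have hjpos := Nat.pos_of_dvd_of_pos hj (by norm_num)
  rw [← Subgroup.relIndex_mul_relIndex _ _ _
    (fixingSubgroup_antitone G X (Set.subset_univ s)) hle] at hdvd
  have h3 : 3 ∣ (fixingSubgroup G (Set.univ : Set X)).relIndex (fixingSubgroup G s) := by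
    refine Nat.dvd_of_mul_dvd_mul_right (show 0 < 6 by norm_num) ?_
    exact hdvd.trans (Nat.mul_dvd_mul_left _ hj)
  have hkpos : (fixingSubgroup G (Set.univ : Set X)).relIndex (fixingSubgroup G s) ≠ 0 :=
    Subgroup.index_ne_zero_of_finite
  rw [← stabilizer_quotient (fixingSubgroup G s)]
  refine transProb_stabilizer_lt (S := (orbit (stabilizer G s) ((1 : G) : G ⧸ _))ᶜ)
    (fun y hy => ?_) (Set.nonempty_of_ncard_ne_zero (hncard ▸ hjpos.ne'))
    (Nat.le_of_dvd (Nat.pos_of_ne_zero hkpos) h3) fun hk => ?_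
  · rw [stabilizer_quotient]
    exact ncard_orbit_fixingSubgroup hs hy
  · rw [hk] at hdvd
    rw [hncard]
    omega

end FixingSubgroup

open MulAction in
/-- The suborbits of `G` at `ω` are the orbit of `b`, of prime length `p`, the orbit of `c`, of
prime length `q > p`, and fixed points of the stabilizer of `ω`. -/
structure HasPrimeSubdegrees (G : Type*) {Ω : Type*} [Group G] [MulAction G Ω] (ω b c : Ω)
    (p q : ℕ) : Prop where
  prime_left : p.Prime
  prime_right : q.Prime
  lt : p < q
  ncard_left : (orbit (stabilizer G ω) b).ncard = p
  ncard_right : (orbit (stabilizer G ω) c).ncard = q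
  ncard_le_one : ∀ x, x ∉ orbit (stabilizer G ω) b → x ∉ orbit (stabilizer G ω) c →
    (orbit (stabilizer G ω) x).ncard ≤ 1

namespace HasPrimeSubdegrees

open MulAction

variable {G Ω : Type*} [Group G] [MulAction G Ω] {ω b c : Ω} {p q : ℕ}

theorem exists_of_transProb_eq [Finite G] [IsPretransitive G Ω] (hp : p.Prime) (hq : q.Prime)
    (hpq : p < q) (h : transProb (stabilizer G ω) (stabilizer G ω) = permProb p * permProb q) :
    ∃ b c, HasPrimeSubdegrees G ω b c p q := by
  have := Finite.of_surjective _ (surjective_smul G ω)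
  have := Fintype.ofFinite (orbitRel.Quotient (stabilizer G ω) Ω)
  have hpos (w : orbitRel.Quotient (stabilizer G ω) Ω) : w.orbit.ncard ≠ 0 :=
    (Set.ncard_pos (Set.toFinite _)).2 w.nonempty_orbit |>.ne'
  rw [transProb_stabilizer ω rfl] at h
  obtain ⟨i, -, j, -, hi, hj, hone⟩ :=
    exists_eq_primes_of_prod_permProb_eq _ (fun w _ => hpos w) hp hq hpq h
  induction i using Quotient.inductionOn' with | h b
  induction j using Quotient.inductionOn' with | h c
  exact ⟨b, c, hp, hq, hpq, hi, hj, fun x hxb hxc => hone (orbitClass _ x) (Finset.mem_univ _)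
    (orbitClass_eq_iff.not.2 hxb) (orbitClass_eq_iff.not.2 hxc)⟩

lemma ncard_le (h : HasPrimeSubdegrees G ω b c p q) {x : Ω}
    (hx : x ∉ orbit (stabilizer G ω) c) : (orbit (stabilizer G ω) x).ncard ≤ p := by
  by_cases hxb : x ∈ orbit (stabilizer G ω) b
  · rw [orbit_eq_iff.2 hxb, h.ncard_left]
  · exact (h.ncard_le_one x hxb hx).trans h.prime_left.one_le

lemma notMem_orbit_left (h : HasPrimeSubdegrees G ω b c p q) {x : Ω}
    (hx : x ∈ fixedPoints (stabilizer G ω) Ω) : x ∉ orbit (stabilizer G ω) b :=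
  notMem_orbit_of_mem_fixedPoints hx (h.ncard_left.trans_ne h.prime_left.ne_one)

lemma notMem_orbit_right (h : HasPrimeSubdegrees G ω b c p q) {x : Ω}
    (hx : x ∈ fixedPoints (stabilizer G ω) Ω) : x ∉ orbit (stabilizer G ω) c :=
  notMem_orbit_of_mem_fixedPoints hx (h.ncard_right.trans_ne h.prime_right.ne_one)

lemma base_notMem_orbit_right (h : HasPrimeSubdegrees G ω b c p q) :
    ω ∉ orbit (stabilizer G ω) c :=
  h.notMem_orbit_right fun u => u.2

lemma left_notMem_orbit_right (h : HasPrimeSubdegrees G ω b c p q) :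
    b ∉ orbit (stabilizer G ω) c := fun hb => by
  have hpq := h.lt
  rw [← h.ncard_left, ← h.ncard_right, orbit_eq_iff.2 hb] at hpq
  exact hpq.false

/-- `p` and `q` divide the index because they are lengths of orbits of the stabilizer of `ω`. -/
lemma mul_dvd_relIndex_fixingSubgroup_univ (h : HasPrimeSubdegrees G ω b c p q) :
    p * q ∣ (fixingSubgroup G (Set.univ : Set Ω)).relIndex (stabilizer G ω) := by
  refine ((Nat.coprime_primes h.prime_left h.prime_right).2 h.lt.ne).mul_dvd_of_dvd_of_dvd ?_ ?_
  · rw [← h.ncard_left, ncard_orbit_subgroup]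
    exact Subgroup.relIndex_dvd_of_le_left _ (fixingSubgroup_univ_le_stabilizer b)
  · rw [← h.ncard_right, ncard_orbit_subgroup]
    exact Subgroup.relIndex_dvd_of_le_left _ (fixingSubgroup_univ_le_stabilizer c)

variable [Finite Ω]

lemma compl_orbit_eq_union (h : HasPrimeSubdegrees G ω b c p q) :
    (orbit (stabilizer G ω) c)ᶜ = orbit (stabilizer G ω) b ∪ fixedPoints (stabilizer G ω) Ω := by
  refine Set.Subset.antisymm (fun x hxc => or_iff_not_imp_left.2 fun hxb => ?_) ?_
  · exact subsingleton_orbit_iff_mem_fixedPoints.1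
      (Set.ncard_le_one_iff_subsingleton.1 (h.ncard_le_one x hxb hxc))
  · rintro x (hxb | hx) hxc
    · exact h.left_notMem_orbit_right (orbit_eq_iff.1 ((orbit_eq_iff.2 hxb).symm.trans
        (orbit_eq_iff.2 hxc)))
    · exact h.notMem_orbit_right hx hxc

lemma ncard_compl_orbit_eq_add (h : HasPrimeSubdegrees G ω b c p q) :
    (orbit (stabilizer G ω) c)ᶜ.ncard = p + (fixedPoints (stabilizer G ω) Ω).ncard := by
  rw [h.compl_orbit_eq_union, Set.ncard_union_eq, h.ncard_left]
  exact Set.disjoint_right.2 fun _ => h.notMem_orbit_left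

lemma orbit_stabilizer_eq (h : HasPrimeSubdegrees G ω b c p q)
    {x : Ω} (hx : x ∉ orbit (stabilizer G ω) c) :
    orbit (stabilizer (stabilizer G ω) x) c = orbit (stabilizer G ω) c := by
  have hpos : 0 < (orbit (stabilizer G ω) x).ncard := (Set.ncard_pos).2 (nonempty_orbit x)
  refine orbit_stabilizer_eq_of_coprime (Set.toFinite _) ?_
  rw [h.ncard_right, Nat.coprime_comm, h.prime_right.coprime_iff_not_dvd]
  exact Nat.not_dvd_of_pos_of_lt hpos ((h.ncard_le hx).trans_lt h.lt)

/-- If `g • ω` lies outside `C`, the orbit of `c`, then the stabilizer of both `ω` and `g • ω` is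
still transitive on `C` by coprimality, so `C` lies in an orbit of the stabilizer of `g • ω`; by its
size that orbit is `g • C`. -/
lemma mem_stabilizer_orbit_iff (h : HasPrimeSubdegrees G ω b c p q) {g : G} :
    g ∈ stabilizer G (orbit (stabilizer G ω) c) ↔ g • ω ∉ orbit (stabilizer G ω) c := by
  refine ⟨fun hg hgω => ?_, fun hg => ?_⟩
  · rw [← mem_stabilizer_iff.1 hg, Set.smul_mem_smul_set_iff] at hgω
    exact h.base_notMem_orbit_right hgω
  · have hsub : orbit (stabilizer G ω) c ⊆ g • orbit (stabilizer G ω) (g⁻¹ • c) := by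
      rw [← h.orbit_stabilizer_eq hg]
      rintro _ ⟨⟨u, hu⟩, rfl⟩
      refine Set.mem_smul_set_iff_inv_smul_mem.2 ⟨⟨g⁻¹ * u * g, ?_⟩, ?_⟩
      · rw [mem_stabilizer_iff, mul_smul, mul_smul, inv_smul_eq_iff]
        exact hu
      · simp [Subgroup.smul_def, mul_smul]
    have hcard := Set.ncard_le_ncard hsub
    rw [Set.ncard_smul_set, h.ncard_right] at hcard
    have hmem : g⁻¹ • c ∈ orbit (stabilizer G ω) c := by
      by_contra hc
      exact (hcard.trans (h.ncard_le hc)).not_gt h.lt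
    rw [orbit_eq_iff.2 hmem] at hsub
    exact (Set.eq_of_subset_of_ncard_le hsub (Set.ncard_smul_set g _).le).symm

lemma stabilizer_le (h : HasPrimeSubdegrees G ω b c p q) :
    stabilizer G ω ≤ stabilizer G (orbit (stabilizer G ω) c) := fun g hg => by
  rw [h.mem_stabilizer_orbit_iff, mem_stabilizer_iff.1 hg]
  exact h.base_notMem_orbit_right

variable [IsPretransitive G Ω]

lemma orbit_stabilizer_orbit (h : HasPrimeSubdegrees G ω b c p q) :
    orbit (stabilizer G (orbit (stabilizer G ω) c)) ω = (orbit (stabilizer G ω) c)ᶜ := by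
  ext x
  obtain ⟨g, rfl⟩ := exists_smul_eq G ω x
  rw [Set.mem_compl_iff, ← h.mem_stabilizer_orbit_iff]
  refine ⟨?_, fun hg => ⟨⟨g, hg⟩, rfl⟩⟩
  rintro ⟨⟨m, hm⟩, hmg : m • ω = g • ω⟩
  rwa [h.mem_stabilizer_orbit_iff, ← hmg, ← h.mem_stabilizer_orbit_iff]

lemma isBlock_compl_orbit (h : HasPrimeSubdegrees G ω b c p q) :
    IsBlock G (orbit (stabilizer G ω) c)ᶜ := by
  rw [← h.orbit_stabilizer_orbit]
  exact IsBlock.of_orbit h.stabilizer_le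

lemma ncard_compl_orbit (h : HasPrimeSubdegrees G ω b c p q) :
    (orbit (stabilizer G ω) c)ᶜ.ncard = q := by
  have hdvd := h.isBlock_compl_orbit.ncard_dvd_card ⟨ω, h.base_notMem_orbit_right⟩
  rw [← Set.ncard_add_ncard_compl (orbit (stabilizer G ω) c), h.ncard_right,
    Nat.dvd_add_left dvd_rfl] at hdvd
  refine (h.prime_right.eq_one_or_self_of_dvd _ hdvd).resolve_left fun hone => ?_
  have hp := h.prime_left.two_le
  have := h.ncard_compl_orbit_eq_add
  omega

lemma relIndex_stabilizer_orbit (h : HasPrimeSubdegrees G ω b c p q) :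
    (stabilizer G ω).relIndex (stabilizer G (orbit (stabilizer G ω) c)) = q := by
  rw [← ncard_orbit_subgroup, h.orbit_stabilizer_orbit, h.ncard_compl_orbit]

lemma index_stabilizer_orbit (h : HasPrimeSubdegrees G ω b c p q) :
    (stabilizer G (orbit (stabilizer G ω) c)).index = 2 := by
  refine Nat.eq_of_mul_eq_mul_left h.prime_right.pos ?_
  calc q * (stabilizer G (orbit (stabilizer G ω) c)).index
      = (stabilizer G ω).index := by
        rw [← h.relIndex_stabilizer_orbit, Subgroup.relIndex_mul_index h.stabilizer_le]
    _ = (orbit (stabilizer G ω) c).ncard + (orbit (stabilizer G ω) c)ᶜ.ncard := by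
        rw [index_stabilizer_of_transitive, Set.ncard_add_ncard_compl]
    _ = q * 2 := by rw [h.ncard_right, h.ncard_compl_orbit, mul_two]

/-- A translate of the block `Cᶜ` by an element outside its stabilizer is disjoint from it, so `C`
and its translate cover `Ω`. -/
lemma union_smul_orbit_eq_univ (h : HasPrimeSubdegrees G ω b c p q) {g : G}
    (hg : g ∉ stabilizer G (orbit (stabilizer G ω) c)) :
    orbit (stabilizer G ω) c ∪ g • orbit (stabilizer G ω) c = Set.univ := by
  have hne : g • (orbit (stabilizer G ω) c)ᶜ ≠ (orbit (stabilizer G ω) c)ᶜ := by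
    rwa [Set.smul_set_compl, Ne, compl_inj_iff]
  rw [← Set.compl_subset_iff_union, ← Set.disjoint_compl_right_iff_subset, ← Set.smul_set_compl]
  exact (h.isBlock_compl_orbit.disjoint_smul_of_ne hne).symm

lemma mul_dvd_relIndex_stabilizer_orbit (h : HasPrimeSubdegrees G ω b c p q) :
    p * q * q ∣ (fixingSubgroup G (Set.univ : Set Ω)).relIndex
      (stabilizer G (orbit (stabilizer G ω) c)) := by
  rw [← Subgroup.relIndex_mul_relIndex _ _ _ (fixingSubgroup_univ_le_stabilizer ω) h.stabilizer_le,
    h.relIndex_stabilizer_orbit]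
  exact mul_dvd_mul_right h.mul_dvd_relIndex_fixingSubgroup_univ q

variable [Finite G]

lemma ncard_fixedPoints_dvd (h : HasPrimeSubdegrees G ω b c p q) :
    (fixedPoints (stabilizer G ω) Ω).ncard ∣ q := by
  have hfix := fixedPoints_stabilizer (G := G) ω
  have hle : Subgroup.normalizer (stabilizer G ω : Set G) ≤
      stabilizer G (orbit (stabilizer G ω) c) := fun n hn =>
    h.mem_stabilizer_orbit_iff.2 (h.notMem_orbit_right (hfix ▸ ⟨⟨n, hn⟩, rfl⟩))
  rw [hfix, ncard_orbit_subgroup, ← h.relIndex_stabilizer_orbit,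
    ← Subgroup.relIndex_mul_relIndex _ _ _ Subgroup.le_normalizer hle]
  exact Nat.dvd_mul_right _ _

theorem eq_two_and_eq_three (h : HasPrimeSubdegrees G ω b c p q) : p = 2 ∧ q = 3 := by
  have hq : q = p + (fixedPoints (stabilizer G ω) Ω).ncard := by
    rw [← h.ncard_compl_orbit_eq_add, h.ncard_compl_orbit]
  have hone : (fixedPoints (stabilizer G ω) Ω).ncard = 1 :=
    (h.prime_right.eq_one_or_self_of_dvd _ h.ncard_fixedPoints_dvd).resolve_right fun hfix =>
      h.prime_left.ne_zero (by omega)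
  rw [hone] at hq
  have heven : 2 ∣ p ∨ 2 ∣ q := by omega
  rcases heven with h2 | h2
  · have := (Nat.prime_dvd_prime_iff_eq Nat.prime_two h.prime_left).1 h2
    omega
  · have := (Nat.prime_dvd_prime_iff_eq Nat.prime_two h.prime_right).1 h2
    have := h.prime_left.two_le
    omega

theorem transProb_fixingSubgroup_orbit_lt (h : HasPrimeSubdegrees G ω b c 2 3) :
    transProb (fixingSubgroup G (orbit (stabilizer G ω) c))
      (fixingSubgroup G (orbit (stabilizer G ω) c)) < permProb 2 * permProb 3 :=
  transProb_fixingSubgroup_lt h.ncard_right h.index_stabilizer_orbit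
    (fun _ => h.union_smul_orbit_eq_univ) h.mul_dvd_relIndex_stabilizer_orbit

end HasPrimeSubdegrees

lemma tp_le_transProb {G : Type*} [Group G] [Finite G] (H : Subgroup G) : tp G ≤ transProb H H :=
  Finset.inf'_le (s := _) _ (@Finset.mem_univ _ (_) H)

lemma exists_transProb_eq_tp (G : Type*) [Group G] [Finite G] :
    ∃ H : Subgroup G, transProb H H = tp G := by
  have := Fintype.ofFinite (Subgroup G)
  obtain ⟨H, -, hH⟩ := Finset.univ.exists_mem_eq_inf' Finset.univ_nonempty
    fun H : Subgroup G => transProb H H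
  refine ⟨H, hH.symm.trans ?_⟩
  rw [tp]
  congr!

theorem stmt17 (p q : ℕ) (hp : p.Prime) (hq : q.Prime) (hpq : p < q)
    (G : Type*) [Group G] [Finite G] :
    tp G ≠ ((p.factorial : ℚ) / (p : ℚ) ^ p) * ((q.factorial : ℚ) / (q : ℚ) ^ q) := by
  intro htp
  obtain ⟨H, hH⟩ := exists_transProb_eq_tp G
  rw [htp, ← MulAction.stabilizer_quotient H] at hH
  obtain ⟨b, c, h⟩ := HasPrimeSubdegrees.exists_of_transProb_eq hp hq hpq hH
  obtain ⟨rfl, rfl⟩ := h.eq_two_and_eq_three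
  exact ((tp_le_transProb _).trans_lt h.transProb_fixingSubgroup_orbit_lt).ne htp
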